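/- Consider a smooth solution of the Bianchi I Einstein–dust system on [t₀,∞) with expanding initial data (H(t₀) < 0) and ρ(t₀) > 0. There exists ε₀ > 0 and a constant C > 0 such that if F(t₀) ≤ ε₀, then for all large t: (i) F(t) ≤ C t^{-2}; (ii) |t H(t) + 2| ≤ C t^{-1}; and (iii) every eigenvalue λ of g(t)⁻¹ k(t) satisfies |λ/H(t) - 1/3| ≤ C t^{-1}. That is, solutions of the Einstein–dust system with small initial anisotropy isotropize, with the same rates as in the Einstein–Vlasov case. -/

import Mathlib

/-!
The mixed tensor `A = g⁻¹ k` satisfies `A' = H A - 4πρ`, so `H' = H² - 12πρ`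
(`hasDerivWithinAt_meanCurv`). Together with `ρ' = Hρ` this makes the volume-type function
`V = 1/ρ` satisfy `V' = -HV` and `V'' = 12π`. Hence `V` is an explicit quadratic polynomial
(`exists_volume`), and `H = -V'/V` gives the asymptotics of `t H + 2` directly.

The Hamiltonian constraint reads `F = 2/3 - 16πρ/H² = (2/3) (V'² - 24πV) / V'²`, whose numerator is
constant in time, so `F` decays like `t⁻²`. Finally, writing `g⁻¹ = D Dᵀ`, an eigenvalue `λ` of `A`
yields an eigenvalue `λ - H/3` of the symmetric matrix `Dᵀ σ D`, whose squared Frobenius norm is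
`F H²`; therefore `|λ/H - 1/3| ≤ √F` (`eigenvalue_sq_le`).
-/

open Matrix

attribute [local instance] Matrix.normedAddCommGroup Matrix.normedSpace

/-- The mean curvature `H = tr(g⁻¹ k)`. -/
noncomputable def meanCurv (g k : Matrix (Fin 3) (Fin 3) ℝ) : ℝ := (g⁻¹ * k).trace

/-- The shear `σ = k - (H/3) g`, the trace-free part of the second fundamental form. -/
noncomputable def shear (g k : Matrix (Fin 3) (Fin 3) ℝ) : Matrix (Fin 3) (Fin 3) ℝ :=
  k - (meanCurv g k / 3) • g

/-- The anisotropy `F = σ_{ab} σ^{ab} / H²`. -/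
noncomputable def anisotropy (g k : Matrix (Fin 3) (Fin 3) ℝ) : ℝ :=
  (g⁻¹ * shear g k * g⁻¹ * shear g k).trace / meanCurv g k ^ 2

/-- A smooth solution of the Bianchi I Einstein–dust system on `[t₀, ∞)`
(Gaussian time, zero cosmological constant). -/
structure BianchiIDust (t₀ : ℝ) (g k : ℝ → Matrix (Fin 3) (Fin 3) ℝ)
    (ρ : ℝ → ℝ) : Prop where
  g_smooth : ContDiffOn ℝ (⊤ : ℕ∞) g (Set.Ici t₀)
  k_smooth : ContDiffOn ℝ (⊤ : ℕ∞) k (Set.Ici t₀)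
  ρ_smooth : ContDiffOn ℝ (⊤ : ℕ∞) ρ (Set.Ici t₀)
  g_posdef : ∀ t ≥ t₀, (g t).PosDef
  g_symm : ∀ t ≥ t₀, (g t).IsSymm
  k_symm : ∀ t ≥ t₀, (k t).IsSymm
  evol_g : ∀ t ≥ t₀, HasDerivWithinAt g (-(2 : ℝ) • k t) (Set.Ici t₀) t
  evol_k : ∀ t ≥ t₀, HasDerivWithinAt k
    (meanCurv (g t) (k t) • k t - (2 : ℝ) • (k t * (g t)⁻¹ * k t)
      - (4 * Real.pi * ρ t) • g t) (Set.Ici t₀) t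
  evol_ρ : ∀ t ≥ t₀, HasDerivWithinAt ρ (meanCurv (g t) (k t) * ρ t) (Set.Ici t₀) t
  constraint : ∀ t ≥ t₀,
    meanCurv (g t) (k t) ^ 2 - ((g t)⁻¹ * k t * (g t)⁻¹ * k t).trace
      = 16 * Real.pi * ρ t

/-! ### Scalar differential equations on a half-line -/

lemma eq_initial_of_deriv_zero {t₀ : ℝ} {f : ℝ → ℝ}
    (hf : ∀ t ≥ t₀, HasDerivWithinAt f 0 (Set.Ici t₀) t) : ∀ t ≥ t₀, f t = f t₀ := by
  intro t ht
  refine constant_of_has_deriv_right_zero (a := t₀) (b := t) ?_ ?_ t ⟨ht, le_rfl⟩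
  · intro x hx
    exact (hf x hx.1).continuousWithinAt.mono fun y hy => hy.1
  · intro x hx
    exact (hf x hx.1).mono (Set.Ici_subset_Ici.2 hx.1)

/-- Solutions of the linear equation `ρ' = hρ` with continuous coefficient stay positive:
`ρ exp (-∫ h)` is constant. -/
lemma pos_of_linear_ode {t₀ : ℝ} {ρ h : ℝ → ℝ} (hc : ContinuousOn h (Set.Ici t₀))
    (hρ : ∀ t ≥ t₀, HasDerivWithinAt ρ (h t * ρ t) (Set.Ici t₀) t) (h0 : 0 < ρ t₀) :
    ∀ t ≥ t₀, 0 < ρ t := by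
  have hcont : Continuous fun t => h (max t₀ t) :=
    hc.comp_continuous (by fun_prop) fun t => Set.mem_Ici.2 (le_max_left _ _)
  have hE : ∀ t ≥ t₀, HasDerivWithinAt (fun t => ∫ s in t₀..t, h (max t₀ s)) (h t)
      (Set.Ici t₀) t := by
    intro t ht
    have := (intervalIntegral.integral_hasDerivAt_right (hcont.intervalIntegrable t₀ t)
      hcont.stronglyMeasurable.stronglyMeasurableAtFilter hcont.continuousAt).hasDerivWithinAt
        (s := Set.Ici t₀)
    simpa [max_eq_right ht] using this
  have key := eq_initial_of_deriv_zero
    (f := fun t => ρ t * Real.exp (-∫ s in t₀..t, h (max t₀ s))) (t₀ := t₀) (by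
      intro t ht
      refine ((hρ t ht).fun_mul (hE t ht).fun_neg.exp).congr_deriv ?_
      ring)
  intro t ht
  have h1 := key t ht
  simp only [intervalIntegral.integral_same, neg_zero, Real.exp_zero, mul_one] at h1
  rw [← h1] at h0
  exact pos_of_mul_pos_left h0 (Real.exp_pos _).le

/-! ### Derivatives of matrix-valued curves -/

lemma hasDerivWithinAt_matrix_iff {s : Set ℝ} {t : ℝ}
    {f : ℝ → Matrix (Fin 3) (Fin 3) ℝ} {f' : Matrix (Fin 3) (Fin 3) ℝ} :
    HasDerivWithinAt f f' s t ↔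
      ∀ i j, HasDerivWithinAt (fun r => f r i j) (f' i j) s t :=
  ⟨fun h i j => hasDerivWithinAt_pi.1 (hasDerivWithinAt_pi.1 h i) j,
    fun h => hasDerivWithinAt_pi.2 fun i => hasDerivWithinAt_pi.2 (h i)⟩

lemma hasDerivWithinAt_matrix_iff_slope {s : Set ℝ} {t : ℝ}
    {f : ℝ → Matrix (Fin 3) (Fin 3) ℝ} {f' : Matrix (Fin 3) (Fin 3) ℝ} :
    HasDerivWithinAt f f' s t ↔
      Filter.Tendsto (slope f t) (nhdsWithin t (s \ {t})) (nhds f') := by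
  rw [hasDerivWithinAt_matrix_iff]
  simp only [hasDerivWithinAt_iff_tendsto_slope]
  exact ⟨fun h => tendsto_pi_nhds.2 fun i => tendsto_pi_nhds.2 fun j => h i j,
    fun h i j => tendsto_pi_nhds.1 (tendsto_pi_nhds.1 h i) j⟩

/-- The derivative of a matrix inverse, obtained from
`g(s)⁻¹ - g(t)⁻¹ = -g(s)⁻¹ (g(s) - g(t)) g(t)⁻¹`. -/
lemma hasDerivWithinAt_matrix_inv {s : Set ℝ} {t : ℝ} (ht : t ∈ s)
    {g : ℝ → Matrix (Fin 3) (Fin 3) ℝ} {g' : Matrix (Fin 3) (Fin 3) ℝ}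
    (hu : ∀ r ∈ s, IsUnit (g r).det) (hg : HasDerivWithinAt g g' s t) :
    HasDerivWithinAt (fun r => (g r)⁻¹) (-((g t)⁻¹ * g' * (g t)⁻¹)) s t := by
  have hgc : ContinuousWithinAt g s t :=
    continuousWithinAt_pi.2 fun i => continuousWithinAt_pi.2 fun j =>
      (hasDerivWithinAt_matrix_iff.1 hg i j).continuousWithinAt
  have hinv : ContinuousWithinAt (fun r => (g r)⁻¹) s t := by
    have hd : ContinuousWithinAt (fun r => (g r).det) s t :=
      (Continuous.matrix_det continuous_id).continuousAt.comp_continuousWithinAt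
        hgc
    have ha : ContinuousWithinAt (fun r => (g r).adjugate) s t :=
      (Continuous.matrix_adjugate continuous_id).continuousAt.comp_continuousWithinAt
        hgc
    have : (fun r => (g r)⁻¹) = fun r => ((g r).det)⁻¹ • (g r).adjugate := by
      funext r
      rw [Matrix.inv_def, Ring.inverse_eq_inv']
    rw [this]
    exact (hd.inv₀ (hu t ht).ne_zero).smul ha
  rw [hasDerivWithinAt_matrix_iff_slope] at hg ⊢
  have hinv' : Filter.Tendsto (fun r => (g r)⁻¹) (nhdsWithin t (s \ {t})) (nhds (g t)⁻¹) :=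
    hinv.mono_left (nhdsWithin_mono _ Set.sdiff_subset)
  have hlim := ((hinv'.mul hg).mul_const ((g t)⁻¹)).neg
  refine hlim.congr' ?_
  filter_upwards [self_mem_nhdsWithin] with r hr
  have h1 : (g r)⁻¹ * g r = 1 := Matrix.nonsing_inv_mul _ (hu r hr.1)
  have h2 : g t * (g t)⁻¹ = 1 := Matrix.mul_nonsing_inv _ (hu t ht)
  simp only [slope, vsub_eq_sub, Matrix.mul_smul, Matrix.smul_mul, ← smul_neg]
  congr 1
  rw [mul_sub, sub_mul, h1, one_mul, mul_assoc, h2, mul_one, neg_sub]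

lemma hasDerivWithinAt_trace {s : Set ℝ} {t : ℝ}
    {f : ℝ → Matrix (Fin 3) (Fin 3) ℝ} {f' : Matrix (Fin 3) (Fin 3) ℝ}
    (hf : HasDerivWithinAt f f' s t) :
    HasDerivWithinAt (fun r => (f r).trace) f'.trace s t := by
  simp only [Matrix.trace, Matrix.diag_apply]
  refine HasDerivWithinAt.fun_sum fun i _ => ?_
  exact hasDerivWithinAt_pi.1 (hasDerivWithinAt_pi.1 hf i) i

lemma hasDerivWithinAt_matrix_mul {s : Set ℝ} {t : ℝ}
    {f h : ℝ → Matrix (Fin 3) (Fin 3) ℝ} {f' h' : Matrix (Fin 3) (Fin 3) ℝ}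
    (hf : HasDerivWithinAt f f' s t) (hh : HasDerivWithinAt h h' s t) :
    HasDerivWithinAt (fun r => f r * h r) (f' * h t + f t * h') s t := by
  refine hasDerivWithinAt_pi.2 fun i => hasDerivWithinAt_pi.2 fun j => ?_
  simp only [Matrix.mul_apply, Matrix.add_apply, ← Finset.sum_add_distrib]
  refine HasDerivWithinAt.fun_sum fun l _ => ?_
  exact (hasDerivWithinAt_pi.1 (hasDerivWithinAt_pi.1 hf i) l).mul
    (hasDerivWithinAt_pi.1 (hasDerivWithinAt_pi.1 hh l) j)

/-! ### Explicit integration of the dust system -/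

/-- The Raychaudhuri-type equation `H' = H² - 12πρ`. -/
lemma hasDerivWithinAt_meanCurv {t₀ : ℝ} {g k : ℝ → Matrix (Fin 3) (Fin 3) ℝ} {ρ : ℝ → ℝ}
    (hsol : BianchiIDust t₀ g k ρ) : ∀ t ≥ t₀,
    HasDerivWithinAt (fun r => meanCurv (g r) (k r))
      (meanCurv (g t) (k t) ^ 2 - 12 * Real.pi * ρ t) (Set.Ici t₀) t := by
  intro t ht
  have hu : ∀ r ∈ Set.Ici t₀, IsUnit (g r).det := fun r hr =>
    (hsol.g_posdef r hr).det_pos.ne'.isUnit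
  have h := hasDerivWithinAt_trace (hasDerivWithinAt_matrix_mul
    (hasDerivWithinAt_matrix_inv ht hu (hsol.evol_g t ht)) (hsol.evol_k t ht))
  have h2 : (g t)⁻¹ * g t = 1 := Matrix.nonsing_inv_mul _ (hu t ht)
  refine h.congr_deriv ?_
  have : -((g t)⁻¹ * (-(2 : ℝ) • k t) * (g t)⁻¹) * k t
      + (g t)⁻¹ * (meanCurv (g t) (k t) • k t - (2 : ℝ) • (k t * (g t)⁻¹ * k t)
      - (4 * Real.pi * ρ t) • g t)
      = meanCurv (g t) (k t) • ((g t)⁻¹ * k t) - (4 * Real.pi * ρ t) • 1 := by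
    simp only [mul_sub, Matrix.mul_smul, Matrix.smul_mul, h2, neg_smul, neg_neg, mul_neg, neg_mul,
      mul_assoc]
    abel
  rw [this, Matrix.trace_sub, Matrix.trace_smul, Matrix.trace_smul, Matrix.trace_one]
  rw [show ((g t)⁻¹ * k t).trace = meanCurv (g t) (k t) from rfl]
  simp only [smul_eq_mul, Fintype.card_fin]
  push_cast
  ring

/-- With `V = 1/ρ`, one has `V' = -HV` and `V'' = 12π`, so `V` is an explicit quadratic. -/
lemma exists_volume {t₀ : ℝ} {g k : ℝ → Matrix (Fin 3) (Fin 3) ℝ} {ρ : ℝ → ℝ}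
    (hsol : BianchiIDust t₀ g k ρ) (hρ₀ : 0 < ρ t₀) :
    ∃ β γ : ℝ, ∀ t ≥ t₀, 0 < ρ t ∧
      1 / ρ t = 6 * Real.pi * t ^ 2 + β * t + γ ∧
      -meanCurv (g t) (k t) / ρ t = 12 * Real.pi * t + β := by
  have hH := hasDerivWithinAt_meanCurv hsol
  have hpos := pos_of_linear_ode (fun t ht => (hH t ht).continuousWithinAt) hsol.evol_ρ hρ₀
  have h1 := eq_initial_of_deriv_zero
    (f := fun t => -meanCurv (g t) (k t) / ρ t - 12 * Real.pi * t) (t₀ := t₀) (by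
      intro t ht
      have hne := (hpos t ht).ne'
      refine (((hH t ht).fun_neg.fun_div (hsol.evol_ρ t ht) hne).fun_sub
        ((hasDerivWithinAt_id t _).const_mul (12 * Real.pi))).congr_deriv ?_
      field_simp
      ring)
  obtain ⟨β, hβ⟩ : ∃ β, β = -meanCurv (g t₀) (k t₀) / ρ t₀ - 12 * Real.pi * t₀ := ⟨_, rfl⟩
  simp only [← hβ] at h1
  have h2 := eq_initial_of_deriv_zero
    (f := fun t => 1 / ρ t - (6 * Real.pi * t ^ 2 + β * t)) (t₀ := t₀) (by
      intro t ht
      have hne := (hpos t ht).ne'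
      refine (((hasDerivWithinAt_const t _ (1 : ℝ)).fun_div (hsol.evol_ρ t ht) hne).fun_sub
        ((((hasDerivWithinAt_id t _).fun_pow 2).const_mul (6 * Real.pi)).fun_add
          ((hasDerivWithinAt_id t _).const_mul β))).congr_deriv ?_
      rw [← h1 t ht]
      simp only [id]
      field_simp
      ring)
  refine ⟨β, 1 / ρ t₀ - (6 * Real.pi * t₀ ^ 2 + β * t₀), fun t ht => ⟨hpos t ht, ?_, ?_⟩⟩
  · linarith [h2 t ht]
  · linarith [h1 t ht]

/-! ### Shear and eigenvalues -/

open scoped MatrixOrder in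
lemma exists_eq_mul_transpose {P : Matrix (Fin 3) (Fin 3) ℝ} (hP : P.PosSemidef) :
    ∃ D : Matrix (Fin 3) (Fin 3) ℝ, P = D * Dᵀ := by
  have hs : (CFC.sqrt P)ᴴ = CFC.sqrt P := (CFC.sqrt_nonneg P).posSemidef.isHermitian
  rw [Matrix.conjTranspose_eq_transpose_of_trivial] at hs
  exact ⟨CFC.sqrt P, by rw [hs, CFC.sqrt_mul_sqrt_self P hP.nonneg]⟩

/-- If `P` is positive semidefinite and `S` symmetric, the square of an eigenvalue of `P S` is at
most `tr((P S)²)`: with `P = D Dᵀ`, `PS` shares its nonzero eigenvalues with the symmetric matrix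
`Dᵀ S D`, and the trace is the squared Frobenius norm of the latter. -/
lemma eigenvalue_sq_le {P S : Matrix (Fin 3) (Fin 3) ℝ} (hP : P.PosSemidef) (hS : S.IsSymm)
    {μ : ℝ} {v : Fin 3 → ℝ} (hv : v ≠ 0) (h : (P * S).mulVec v = μ • v) :
    μ ^ 2 ≤ (P * S * P * S).trace := by
  obtain ⟨D, rfl⟩ : ∃ D : Matrix (Fin 3) (Fin 3) ℝ, P = D * Dᵀ := by
    exact exists_eq_mul_transpose hP
  set M := Dᵀ * S * D with hM
  set w := (Dᵀ * S).mulVec v with hw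
  have hMs : Mᵀ = M := by
    simp [hM, Matrix.transpose_mul, hS.eq, mul_assoc]
  have htr : (D * Dᵀ * S * (D * Dᵀ) * S).trace = ∑ i, ∑ j, M i j ^ 2 := by
    have : (D * Dᵀ * S * (D * Dᵀ) * S).trace = (M * Mᵀ).trace := by
      rw [hMs, hM, show D * Dᵀ * S * (D * Dᵀ) * S = D * (Dᵀ * S * D * Dᵀ * S) by
        simp only [mul_assoc], Matrix.trace_mul_comm]
      simp only [mul_assoc]
    rw [this]
    simp [Matrix.trace, Matrix.mul_apply, pow_two]
  rw [htr]
  have hDw : D.mulVec w = μ • v := by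
    rw [hw, Matrix.mulVec_mulVec, ← h, mul_assoc]
  have hMw : M.mulVec w = μ • w := by
    rw [hM, ← Matrix.mulVec_mulVec, hDw, Matrix.mulVec_smul]
  by_cases hw0 : w = 0
  · have : μ = 0 := by
      rw [hw0, Matrix.mulVec_zero] at hDw
      exact (smul_eq_zero.1 hDw.symm).resolve_right hv
    rw [this, zero_pow two_ne_zero]
    exact Finset.sum_nonneg fun i _ => Finset.sum_nonneg fun j _ => sq_nonneg _
  -- Row-wise Cauchy–Schwarz bounds `|M w|²` by `‖M‖² |w|²`.
  have hrow : ∀ i, (μ * w i) ^ 2 ≤ (∑ j, M i j ^ 2) * ∑ j, w j ^ 2 := by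
    intro i
    have hi : μ * w i = ∑ j, M i j * w j := (congrFun hMw i).symm
    rw [hi]
    exact Finset.sum_mul_sq_le_sq_mul_sq _ _ _
  have hsum : μ ^ 2 * ∑ i, w i ^ 2 ≤ (∑ i, ∑ j, M i j ^ 2) * ∑ j, w j ^ 2 := by
    rw [Finset.sum_mul, Finset.mul_sum]
    refine Finset.sum_le_sum fun i _ => ?_
    simpa [mul_pow] using hrow i
  have hwpos : 0 < ∑ i, w i ^ 2 := by
    obtain ⟨i, hi⟩ := Function.ne_iff.1 hw0
    exact Finset.sum_pos' (fun _ _ => sq_nonneg _) ⟨i, Finset.mem_univ _, by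
      have : w i ≠ 0 := hi
      positivity⟩
  exact le_of_mul_le_mul_right hsum hwpos

lemma inv_mul_shear {g k : Matrix (Fin 3) (Fin 3) ℝ} (hg : g.PosDef) :
    g⁻¹ * shear g k = g⁻¹ * k - (meanCurv g k / 3) • (1 : Matrix (Fin 3) (Fin 3) ℝ) := by
  rw [shear, mul_sub, Matrix.mul_smul, Matrix.nonsing_inv_mul _ hg.det_pos.ne'.isUnit]

lemma trace_shear_sq {g k : Matrix (Fin 3) (Fin 3) ℝ} (hg : g.PosDef) :
    (g⁻¹ * shear g k * g⁻¹ * shear g k).trace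
      = (g⁻¹ * k * g⁻¹ * k).trace - meanCurv g k ^ 2 / 3 := by
  rw [mul_assoc _ (g⁻¹) (shear g k), inv_mul_shear hg, mul_assoc _ (g⁻¹) k]
  have : (g⁻¹ * k).trace = meanCurv g k := rfl
  simp only [sub_mul, mul_sub, Matrix.trace_sub, Matrix.smul_mul, Matrix.mul_smul, one_mul, mul_one,
    Matrix.trace_smul, Matrix.trace_one, this, smul_eq_mul, Fintype.card_fin]
  push_cast
  ring


/-- **Isotropization of the Bianchi I Einstein–dust system.**
For a smooth expanding solution of the Bianchi I Einstein–dust system with `ρ(t₀) > 0`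
and small initial anisotropy: (i) `F(t) = O(t⁻²)`, (ii) `H(t) = -2 t⁻¹ (1 + O(t⁻¹))`, and
(iii) every generalized Kasner exponent (eigenvalue of `g(t)⁻¹ k(t)` divided by `H(t)`)
converges to `1/3` at rate `t⁻¹` — the same rates as in the Einstein–Vlasov case. -/
theorem dust_isotropization (t₀ : ℝ) (g k : ℝ → Matrix (Fin 3) (Fin 3) ℝ) (ρ : ℝ → ℝ)
    (hsol : BianchiIDust t₀ g k ρ)
    (hexp : meanCurv (g t₀) (k t₀) < 0) (hρ₀ : 0 < ρ t₀) :
    ∃ ε₀ > (0 : ℝ), ∃ C > (0 : ℝ),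
      anisotropy (g t₀) (k t₀) ≤ ε₀ →
        ∃ T ≥ t₀, ∀ t ≥ T,
          anisotropy (g t) (k t) ≤ C * t ^ (-(2 : ℝ)) ∧
          |t * meanCurv (g t) (k t) + 2| ≤ C * t⁻¹ ∧
          ∀ lam : ℝ, (∃ v : Fin 3 → ℝ, v ≠ 0 ∧ ((g t)⁻¹ * k t).mulVec v = lam • v) →
            |lam / meanCurv (g t) (k t) - 1 / 3| ≤ C * t⁻¹ := by
  obtain ⟨β, γ, hV⟩ := exists_volume hsol hρ₀
  set K : ℝ := |2 / 3 * (β ^ 2 - 24 * Real.pi * γ)| with hK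
  have hK0 : 0 ≤ K := abs_nonneg _
  have hsK := Real.sqrt_nonneg K
  set C : ℝ := K + √K + |β| + 2 * |γ| + 1 with hC
  have hβ0 := abs_nonneg β
  have hγ0 := abs_nonneg γ
  refine ⟨1, one_pos, C, by positivity, fun _ => ⟨max t₀ (|β| + |γ| + 1), le_max_left _ _, ?_⟩⟩
  intro t ht
  have ht0 : t₀ ≤ t := (le_max_left _ _).trans ht
  have ht1 : |β| + |γ| + 1 ≤ t := (le_max_right _ _).trans ht
  have htpos : 0 < t := by linarith
  obtain ⟨hρ, hv, hv'⟩ := hV t ht0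
  have hg := hsol.g_posdef t ht0
  have hcon := hsol.constraint t ht0
  have htrace := trace_shear_sq (k := k t) hg
  set H := meanCurv (g t) (k t) with hH
  have hpi := Real.pi_gt_three
  -- `V' ≥ t` and `V ≥ t²` once `t ≥ |β| + |γ| + 1`.
  have hV1 : t ≤ 12 * Real.pi * t + β := by
    nlinarith [neg_abs_le β]
  have hV2 : t ^ 2 ≤ 6 * Real.pi * t ^ 2 + β * t + γ := by
    nlinarith [neg_abs_le β, neg_abs_le γ, sq_nonneg t, mul_pos htpos htpos]
  have hHρ : H = -((12 * Real.pi * t + β) * ρ t) := by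
    rw [← hv']
    field_simp
  have hρV : ρ t * (6 * Real.pi * t ^ 2 + β * t + γ) = 1 := by
    rw [← hv]
    field_simp
  have hHneg : H < 0 := by
    rw [hHρ]
    have : 0 < (12 * Real.pi * t + β) * ρ t := mul_pos (by linarith) hρ
    linarith
  have hF : anisotropy (g t) (k t)
      = 2 / 3 * (β ^ 2 - 24 * Real.pi * γ) / (12 * Real.pi * t + β) ^ 2 := by
    have hne : 12 * Real.pi * t + β ≠ 0 := by linarith
    have hs : ((g t)⁻¹ * shear (g t) (k t) * (g t)⁻¹ * shear (g t) (k t)).trace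
        = 2 / 3 * (β ^ 2 - 24 * Real.pi * γ) * ρ t ^ 2 := by
      have e1 : H ^ 2 = (12 * Real.pi * t + β) ^ 2 * ρ t ^ 2 := by rw [hHρ]; ring
      linear_combination htrace - hcon + 2 / 3 * e1 + 16 * Real.pi * ρ t * hρV
    rw [anisotropy, hs, ← hH, hHρ]
    have := hρ.ne'
    field_simp
  have hFle : anisotropy (g t) (k t) ≤ K / t ^ 2 := by
    rw [hF]
    gcongr
    exact le_abs_self _
  refine ⟨?_, ?_, ?_⟩
  · rw [Real.rpow_neg htpos.le, Real.rpow_two, ← div_eq_mul_inv]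
    refine hFle.trans ?_
    gcongr
    linarith
  · have e : t * H + 2 = (β * t + 2 * γ) * ρ t := by
      rw [hHρ]
      linear_combination (-2) * hρV
    have hnum : |β * t + 2 * γ| ≤ C * t := by
      calc |β * t + 2 * γ| ≤ |β * t| + |2 * γ| := abs_add_le _ _
        _ = |β| * t + 2 * |γ| := by rw [abs_mul, abs_mul, abs_of_pos htpos, abs_two]
        _ ≤ C * t := by nlinarith
    have hρle : ρ t ≤ (t ^ 2)⁻¹ := by
      rw [← one_div, le_div_iff₀ (by positivity), ← hρV]
      gcongr
    rw [e, abs_mul, abs_of_pos hρ]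
    calc |β * t + 2 * γ| * ρ t ≤ (C * t) * (t ^ 2)⁻¹ := by gcongr
      _ = C * t⁻¹ := by field_simp
  · rintro lam ⟨v, hv0, hlam⟩
    have hsymm : (shear (g t) (k t)).IsSymm :=
      (hsol.k_symm t ht0).sub ((hsol.g_symm t ht0).smul _)
    have hev : ((g t)⁻¹ * shear (g t) (k t)).mulVec v = (lam - H / 3) • v := by
      rw [inv_mul_shear hg, Matrix.sub_mulVec, hlam, Matrix.smul_mulVec, Matrix.one_mulVec,
        sub_smul]
    have hle := eigenvalue_sq_le hg.inv.posSemidef hsymm hv0 hev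
    have hsq : (lam / H - 1 / 3) ^ 2 ≤ anisotropy (g t) (k t) := by
      have hHne := hHneg.ne
      have hH2 : 0 < H ^ 2 := by positivity
      rw [anisotropy, ← hH, le_div_iff₀ hH2]
      refine le_trans (le_of_eq ?_) hle
      field_simp
    calc |lam / H - 1 / 3| ≤ √(K / t ^ 2) := Real.abs_le_sqrt (hsq.trans hFle)
      _ = √K * t⁻¹ := by rw [Real.sqrt_div hK0, Real.sqrt_sq htpos.le, div_eq_mul_inv]
      _ ≤ C * t⁻¹ := by
        gcongr
        linarith
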